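/- Let (X,T) and (Y,S) be topological dynamical systems on compact metric spaces, F: X×Y → ℝ continuous, and (n_k) a strictly increasing sequence of positive integers. If x ∈ X is quasi-generic along (n_k) for μ ∈ M_T(X) and y ∈ Y is quasi-generic along (n_k) for ν ∈ M_S(Y), then F̄(μ,ν) := inf_{λ ∈ J(μ,ν)} ∫ F dλ ≤ liminf_k (1/n_k) ∑_{j=0}^{n_k−1} F(T^j x, S^j y). -/

import Mathlib

open MeasureTheory Filter

/-- A joining of `μ ∈ M_T(X)` and `ν ∈ M_S(Y)`. -/
def IsJoining2 {X Y : Type*} [MeasurableSpace X] [MeasurableSpace Y] (T : X → X) (S : Y → Y)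
    (μ : Measure X) (ν : Measure Y) (lam : Measure (X × Y)) : Prop :=
  IsProbabilityMeasure lam ∧ Measure.map (Prod.map T S) lam = lam ∧
    Measure.map Prod.fst lam = μ ∧ Measure.map Prod.snd lam = ν

/-- `F̄(μ,ν)`: infimum of `∫ F` over joinings of `μ` and `ν`. -/
noncomputable def Fbar {X Y : Type*} [MeasurableSpace X] [MeasurableSpace Y]
    (T : X → X) (S : Y → Y) (F : X × Y → ℝ) (μ : Measure X) (ν : Measure Y) : ℝ :=
  sInf {r : ℝ | ∃ lam : Measure (X × Y), IsJoining2 T S μ ν lam ∧ r = ∫ p, F p ∂lam}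

lemma empirical_aux {Z : Type*} [MetricSpace Z] [CompactSpace Z] [MeasurableSpace Z] [BorelSpace Z]
    (z : ℕ → Z) (n : ℕ) (hn : 0 < n) :
    ∃ P : ProbabilityMeasure Z, ∀ f : C(Z, ℝ),
      ∫ p, f p ∂(P : Measure Z) = (n : ℝ)⁻¹ * ∑ j ∈ Finset.range n, f (z j) := by
  refine ⟨⟨(n : ENNReal)⁻¹ • ∑ j ∈ Finset.range n, Measure.dirac (z j), ⟨?_⟩⟩, ?_⟩
  · simp
    exact ENNReal.inv_mul_cancel (by exact_mod_cast hn.ne') (by simp)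
  · intro f
    simp only [ProbabilityMeasure.coe_mk]
    rw [integral_smul_measure, integral_finsetSum_measure]
    · simp
    · intro i _
      exact f.continuous.integrable_of_hasCompactSupport (HasCompactSupport.of_compactSpace f)

lemma joining_aux {X Y : Type*}
    [MetricSpace X] [CompactSpace X] [MeasurableSpace X] [BorelSpace X]
    [MetricSpace Y] [CompactSpace Y] [MeasurableSpace Y] [BorelSpace Y]
    (T : X → X) (hT : Continuous T) (S : Y → Y) (hS : Continuous S)
    (nk : ℕ → ℕ) (hnk : StrictMono nk) (hpos : ∀ k, 0 < nk k)
    (μ : Measure X) (hμp : IsProbabilityMeasure μ)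
    (ν : Measure Y) (hνp : IsProbabilityMeasure ν)
    (x : X) (y : Y)
    (hqx : ∀ f : C(X, ℝ),
      Tendsto (fun k => (nk k : ℝ)⁻¹ * ∑ j ∈ Finset.range (nk k), f (T^[j] x)) atTop
        (nhds (∫ z, f z ∂μ)))
    (hqy : ∀ g : C(Y, ℝ),
      Tendsto (fun k => (nk k : ℝ)⁻¹ * ∑ j ∈ Finset.range (nk k), g (S^[j] y)) atTop
        (nhds (∫ z, g z ∂ν)))
    (U : Ultrafilter ℕ) (hU : (U : Filter ℕ) ≤ atTop) :
    ∃ lam : Measure (X × Y), IsJoining2 T S μ ν lam ∧ ∀ f : C(X × Y, ℝ),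
      Tendsto (fun k => (nk k : ℝ)⁻¹ * ∑ j ∈ Finset.range (nk k), f (T^[j] x, S^[j] y)) U
        (nhds (∫ z, f z ∂lam)) := by
  choose P hP using fun k => empirical_aux (fun j => (T^[j] x, S^[j] y)) (nk k) (hpos k)
  obtain ⟨L, -, hL⟩ := isCompact_univ.ultrafilter_le_nhds (U.map P) (by simp)
  have hL' : Tendsto P U (nhds L) := hL
  rw [ProbabilityMeasure.tendsto_iff_forall_integral_tendsto] at hL'
  have key : ∀ f : C(X × Y, ℝ),
      Tendsto (fun k => (nk k : ℝ)⁻¹ * ∑ j ∈ Finset.range (nk k), f (T^[j] x, S^[j] y)) U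
        (nhds (∫ z, f z ∂(L : Measure (X × Y)))) := by
    intro f
    have := hL' (BoundedContinuousFunction.mkOfCompact f)
    simp only [BoundedContinuousFunction.mkOfCompact_apply, hP] at this
    exact this
  have hTS : Continuous (Prod.map T S) := hT.prodMap hS
  refine ⟨L, ⟨inferInstance, ?_, ?_, ?_⟩, key⟩
  · have : IsProbabilityMeasure (Measure.map (Prod.map T S) (L : Measure (X × Y))) :=
      Measure.isProbabilityMeasure_map hTS.aemeasurable
    apply ext_of_forall_integral_eq_of_IsFiniteMeasure
    intro f
    rw [integral_map hTS.aemeasurable f.continuous.aestronglyMeasurable]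
    have h1 := key ⟨fun p => f (Prod.map T S p), f.continuous.comp hTS⟩
    have h2 := key ⟨f, f.continuous⟩
    refine sub_eq_zero.1 (tendsto_nhds_unique (h1.sub h2) ?_)
    have hn : Tendsto (fun k => (nk k : ℝ)⁻¹ * (2 * ‖f‖)) U (nhds 0) := by
      have := (tendsto_inv_atTop_zero.comp
        ((tendsto_natCast_atTop_atTop (R := ℝ)).comp hnk.tendsto_atTop)).mul_const (2 * ‖f‖)
      rw [zero_mul] at this
      exact this.mono_left hU
    refine squeeze_zero_norm (fun k => ?_) hn
    simp only [ContinuousMap.coe_mk, Prod.map_apply, ← Function.iterate_succ_apply']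
    rw [← mul_sub, ← Finset.sum_sub_distrib,
      Finset.sum_range_sub (fun j => f (T^[j] x, S^[j] y)), norm_mul,
      Real.norm_of_nonneg (by positivity)]
    gcongr
    refine (norm_sub_le _ _).trans ?_
    rw [two_mul]
    exact add_le_add (f.norm_coe_le_norm _) (f.norm_coe_le_norm _)
  · have : IsProbabilityMeasure (Measure.map Prod.fst (L : Measure (X × Y))) :=
      Measure.isProbabilityMeasure_map measurable_fst.aemeasurable
    apply ext_of_forall_integral_eq_of_IsFiniteMeasure
    intro f
    rw [integral_map measurable_fst.aemeasurable f.continuous.aestronglyMeasurable]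
    exact tendsto_nhds_unique (key ⟨fun p => f p.1, f.continuous.comp continuous_fst⟩)
      ((hqx ⟨f, f.continuous⟩).mono_left hU)
  · have : IsProbabilityMeasure (Measure.map Prod.snd (L : Measure (X × Y))) :=
      Measure.isProbabilityMeasure_map measurable_snd.aemeasurable
    apply ext_of_forall_integral_eq_of_IsFiniteMeasure
    intro f
    rw [integral_map measurable_snd.aemeasurable f.continuous.aestronglyMeasurable]
    exact tendsto_nhds_unique (key ⟨fun p => f p.2, f.continuous.comp continuous_snd⟩)
      ((hqy ⟨f, f.continuous⟩).mono_left hU)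

/-- `F̄(μ,ν)` bounds from below the liminf of the ergodic averages
of `F` along a pair of quasi-generic points. -/
theorem stmt14 {X Y : Type*}
    [MetricSpace X] [CompactSpace X] [MeasurableSpace X] [BorelSpace X]
    [MetricSpace Y] [CompactSpace Y] [MeasurableSpace Y] [BorelSpace Y]
    (T : X → X) (hT : Continuous T) (S : Y → Y) (hS : Continuous S)
    (F : X × Y → ℝ) (hF : Continuous F)
    (nk : ℕ → ℕ) (hnk : StrictMono nk) (hpos : ∀ k, 0 < nk k)
    (μ : Measure X) (hμp : IsProbabilityMeasure μ) (hμ : Measure.map T μ = μ)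
    (ν : Measure Y) (hνp : IsProbabilityMeasure ν) (hν : Measure.map S ν = ν)
    (x : X) (y : Y)
    (hqx : ∀ f : C(X, ℝ),
      Tendsto (fun k => (nk k : ℝ)⁻¹ * ∑ j ∈ Finset.range (nk k), f (T^[j] x)) atTop
        (nhds (∫ z, f z ∂μ)))
    (hqy : ∀ g : C(Y, ℝ),
      Tendsto (fun k => (nk k : ℝ)⁻¹ * ∑ j ∈ Finset.range (nk k), g (S^[j] y)) atTop
        (nhds (∫ z, g z ∂ν))) :
    Fbar T S F μ ν
      ≤ liminf (fun k => (nk k : ℝ)⁻¹ * ∑ j ∈ Finset.range (nk k), F (T^[j] x, S^[j] y)) atTop := by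
  obtain ⟨C, hC⟩ : ∃ C, ∀ p, ‖F p‖ ≤ C :=
    ⟨_, (BoundedContinuousFunction.mkOfCompact ⟨F, hF⟩).norm_coe_le_norm⟩
  by_contra! hlt
  obtain ⟨b, hb1, hb2⟩ := exists_between hlt
  have hub : ∀ k, (nk k : ℝ)⁻¹ * ∑ j ∈ Finset.range (nk k), F (T^[j] x, S^[j] y) ≤ C := by
    intro k
    have h0 : (0 : ℝ) < nk k := by exact_mod_cast hpos k
    rw [inv_mul_le_iff₀ h0]
    refine (Finset.sum_le_card_nsmul _ _ C fun j _ => (le_abs_self _).trans (hC _)).trans ?_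
    simp
  have hfr := frequently_lt_of_liminf_lt
    (isCoboundedUnder_ge_of_le atTop hub) hb1
  have : (atTop ⊓ Filter.principal
      {k | (nk k : ℝ)⁻¹ * ∑ j ∈ Finset.range (nk k), F (T^[j] x, S^[j] y) < b}).NeBot :=
    Filter.frequently_mem_iff_neBot.1 hfr
  obtain ⟨U, hU⟩ := Ultrafilter.exists_le
    (atTop ⊓ Filter.principal
      {k | (nk k : ℝ)⁻¹ * ∑ j ∈ Finset.range (nk k), F (T^[j] x, S^[j] y) < b})
  obtain ⟨lam, hlam, hlim⟩ := joining_aux T hT S hS nk hnk hpos μ hμp ν hνp x y hqx hqy U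
    (hU.trans inf_le_left)
  have hle : ∫ p, F p ∂lam ≤ b := by
    refine le_of_tendsto (hlim ⟨F, hF⟩) ?_
    have : ∀ᶠ k in (U : Filter ℕ),
        (nk k : ℝ)⁻¹ * ∑ j ∈ Finset.range (nk k), F (T^[j] x, S^[j] y) < b :=
      (hU.trans inf_le_right) (Filter.mem_principal_self _)
    exact this.mono fun k hk => hk.le
  have hge : Fbar T S F μ ν ≤ ∫ p, F p ∂lam := by
    refine csInf_le ⟨-C, ?_⟩ ⟨lam, hlam, rfl⟩
    rintro r ⟨l, hl, rfl⟩
    have := hl.1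
    have := norm_integral_le_of_norm_le_const (μ := l) (f := F) (Filter.Eventually.of_forall hC)
    simp only [probReal_univ, mul_one] at this
    exact (abs_le.1 this).1
  linarith
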